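/- Let A ∈ ℝ^{n×n}, B ∈ ℝ^{n×m}, C ∈ ℝ^{q×n} with (A,B) stabilizable, (C,A) detectable, and all eigenvalues of A in the closed unit disc, and let κ̄ ∈ ℕ satisfy κ̄·ω_max < π/2. Let F ∈ ℝ^{n×q} be such that A − FC is Schur stable. Then there exist ρ > 1/2 and ε* > 0, depending only on A, B and κ̄, such that for every ε ∈ (0, ε*] the following holds. Let N ∈ ℕ, let a_{ij} ≥ 0 (i,j = 1,…,N) with a_{ii} = 0, let ι_i ∈ {0,1}, set d_in(i) = Σ_j a_{ij}, let L be the Laplacian matrix of the weights (a_{ij}), L̄ = L + diag(ι_1,…,ι_N) with entries ℓ̄_{ij}, D_in = diag(d_in(1),…,d_in(N)), and D̄ = I − (2I + D_in)^{−1} L̄, and assume all eigenvalues of D̄ lie in the open unit disc. Let κ_1, …, κ_N ∈ {0,…,κ̄}, let x_r : ℕ → ℝ^n satisfy x_r(k+1) = A x_r(k) with y_r(k) = C x_r(k), and consider for i = 1,…,N the closed-loop partial-state-coupling system x_i(k+1) = A x_i(k) + B u_i(k − κ_i), y_i(k) = C x_i(k), x̂_i(k+1) = A x̂_i(k) + B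 ζ̂_{i2}(k) + F( ζ̄_i(k) − C x̂_i(k) ), χ_i(k+1) = A χ_i(k) + B u_i(k − κ_i) + A x̂_i(k) − A ζ̂_{i1}(k), u_i(k) = −ρ K_ε χ_i(k), where ζ̄_i(k) = (2 + d_in(i))^{−1} [ Σ_{j=1}^N a_{ij}(y_i(k) − y_j(k)) + ι_i (y_i(k) − y_r(k)) ], ζ̂_{i1}(k) = (2 + d_in(i))^{−1} Σ_{j=1}^N ℓ̄_{ij} χ_j(k), and ζ̂_{i2}(k) = (2 + d_in(i))^{−1} Σ_{j=1}^N ℓ̄_{ij} u_j(k − κ_j), with arbitrary initial data on {−κ̄, …, 0}. Then x_i(k) − x_r(k) → 0 as k → ∞ for every i = 1, …, N. -/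

import Mathlib

open Matrix Filter Topology Kronecker
open scoped Classical

noncomputable section

/-- A complex square matrix is Schur stable if all its eigenvalues lie in the open unit disc. -/
def SchurStableC {ι : Type*} [Fintype ι] [DecidableEq ι] (M : Matrix ι ι ℂ) : Prop :=
  ∀ μ ∈ spectrum ℂ M, ‖μ‖ < 1

/-- A real square matrix is Schur stable if all its (complex) eigenvalues lie in the open
unit disc. -/
def SchurStable {ι : Type*} [Fintype ι] [DecidableEq ι] (M : Matrix ι ι ℝ) : Prop :=
  SchurStableC (M.map Complex.ofReal)

/-- All eigenvalues of a real square matrix lie in the closed unit disc. -/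
def EigInClosedUnitDisc {ι : Type*} [Fintype ι] [DecidableEq ι] (M : Matrix ι ι ℝ) : Prop :=
  ∀ μ ∈ spectrum ℂ (M.map Complex.ofReal), ‖μ‖ ≤ 1

/-- The pair (A,B) is stabilizable. -/
def Stabilizable {n m : ℕ} (A : Matrix (Fin n) (Fin n) ℝ) (B : Matrix (Fin n) (Fin m) ℝ) : Prop :=
  ∃ K : Matrix (Fin m) (Fin n) ℝ, SchurStable (A - B * K)

/-- The pair (C,A) is detectable. -/
def Detectable {n q : ℕ} (C : Matrix (Fin q) (Fin n) ℝ) (A : Matrix (Fin n) (Fin n) ℝ) : Prop :=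
  ∃ F : Matrix (Fin n) (Fin q) ℝ, SchurStable (A - F * C)

/-- `P` is a positive definite solution of the discrete algebraic Riccati equation
`AᵀPA − P − AᵀPB(I + BᵀPB)⁻¹BᵀPA + εI = 0`. -/
def IsDARESol {n m : ℕ} (A : Matrix (Fin n) (Fin n) ℝ) (B : Matrix (Fin n) (Fin m) ℝ)
    (ε : ℝ) (P : Matrix (Fin n) (Fin n) ℝ) : Prop :=
  P.PosDef ∧
    Aᵀ * P * A - P - Aᵀ * P * B * (1 + Bᵀ * P * B)⁻¹ * (Bᵀ * P * A)
      + ε • (1 : Matrix (Fin n) (Fin n) ℝ) = 0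

/-- The low-gain feedback `K = (I + BᵀPB)⁻¹BᵀPA`. -/
def gainK {n m : ℕ} (A : Matrix (Fin n) (Fin n) ℝ) (B : Matrix (Fin n) (Fin m) ℝ)
    (P : Matrix (Fin n) (Fin n) ℝ) : Matrix (Fin m) (Fin n) ℝ :=
  (1 + Bᵀ * P * B)⁻¹ * (Bᵀ * P * A)

/-- `ω_max`: zero if `A` is Schur stable, otherwise the largest `ω ∈ [0,π]` with
`det(e^{iω}I − A) = 0`. -/
def omegaMax {n : ℕ} (A : Matrix (Fin n) (Fin n) ℝ) : ℝ :=
  if SchurStable A then 0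
  else sSup {ω : ℝ | ω ∈ Set.Icc 0 Real.pi ∧
    (Complex.exp (ω * Complex.I) • (1 : Matrix (Fin n) (Fin n) ℂ)
      - A.map Complex.ofReal).det = 0}

/-- In-degree `d_in(i) = Σ_j a_{ij}`. -/
def dIn {N : ℕ} (a : Fin N → Fin N → ℝ) (i : Fin N) : ℝ := ∑ j, a i j

/-- The Laplacian matrix of the weights `a`. -/
def lapL {N : ℕ} (a : Fin N → Fin N → ℝ) : Matrix (Fin N) (Fin N) ℝ :=
  Matrix.of fun i j => if i = j then dIn a i else -a i j

/-- The expanded Laplacian `L̄ = L + diag(ι)`. -/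
def lapLbar {N : ℕ} (a : Fin N → Fin N → ℝ) (ι : Fin N → ℝ) : Matrix (Fin N) (Fin N) ℝ :=
  lapL a + Matrix.diagonal ι

/-- `D̄ = I − (2I + D_in)⁻¹ L̄`. -/
def DbarM {N : ℕ} (a : Fin N → Fin N → ℝ) (ι : Fin N → ℝ) : Matrix (Fin N) (Fin N) ℝ :=
  1 - ((2 : ℝ) • (1 : Matrix (Fin N) (Fin N) ℝ) + Matrix.diagonal (dIn a))⁻¹ * lapLbar a ι

/-!
The Riccati solutions stay bounded as `ε → 0`, because a stabilizing feedback has finite cost, and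
their limit is `0`, because `A` has no eigenvalue outside the closed unit disc. Once `P` is small,
completing the square shows that `A - s B K` is Schur stable whenever `Re s ≥ 3/4` and `|s| ≤ ρ`.
A nonzero root `z` of the delayed loop `w(k+1) = A w(k) - ρ B K w(k-κ)` is an eigenvalue of
`A - s B K` with `s = ρ z^(-κ)`. The homotopy `s = ρ (1 - t + t z^(-κ))` starts at the delay-free
loop, and no root meets the unit circle along it: for `ρ = 1 / cos (κ̄ ω_max)`, the condition
`Re s ≥ 3/4` holds at the points of the circle close to eigenvalues of `A`, and at the remaining
points `B K` is too small for `A - s B K` to have an eigenvalue there.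

On the network, each observer estimates the normalized coupling of the tracking errors `x - x_r`
with error dynamics `A - F C`. Hence `χ - (x - x_r)` obeys the stable dynamics `D̄ ⊗ A` up to a
vanishing term, and then each tracking error obeys its own delayed loop up to a vanishing term.
-/

section Powers

variable {𝔸 : Type*} [NormedRing 𝔸] [NormedAlgebra ℂ 𝔸] [CompleteSpace 𝔸]

lemma exists_pow_isBigO_of_spectralRadius_lt {a : 𝔸} {R : NNReal}
    (ha : spectralRadius ℂ a < R) :
    ∃ r : NNReal, 0 < r ∧ r < R ∧ (fun k : ℕ => a ^ k) =O[atTop] fun k => (r : ℝ) ^ k := by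
  obtain ⟨r, har, hrR⟩ := ENNReal.lt_iff_exists_nnreal_btwn.1 ha
  refine ⟨r, ENNReal.coe_pos.1 (pos_of_gt har), ENNReal.coe_lt_coe.1 hrR, .of_bound' ?_⟩
  filter_upwards [(spectrum.pow_nnnorm_pow_one_div_tendsto_nhds_spectralRadius a).eventually
    (gt_mem_nhds har), eventually_ge_atTop 1] with k hk hk1
  rw [one_div, ENNReal.rpow_inv_lt_iff (by positivity), ENNReal.rpow_natCast] at hk
  rw [norm_pow (r : ℝ), NNReal.norm_eq]
  exact_mod_cast hk.le

lemma eq_pow_add_sum_of_recurrence {R E : Type*} [Semiring R] [AddCommMonoid E]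
    [TopologicalSpace E] [Module R E] {T : E →L[R] E} {w g : ℕ → E}
    (hw : ∀ k, w (k + 1) = T (w k) + g k) (k : ℕ) :
    w k = (T ^ k) (w 0) + ∑ j ∈ Finset.range k, (T ^ j) (g (k - (j + 1))) := by
  induction k with
  | zero => simp
  | succ k ih =>
    rw [hw, ih, Finset.sum_range_succ']
    simp [pow_succ', map_sum, add_assoc]

lemma tendsto_zero_of_recurrence {E : Type*} [NormedAddCommGroup E] [NormedSpace ℂ E]
    [CompleteSpace E] {T : E →L[ℂ] E} (hT : spectralRadius ℂ T < 1) {w g : ℕ → E}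
    (hg : Tendsto g atTop (𝓝 0)) (hw : ∀ k, w (k + 1) = T (w k) + g k) : Tendsto w atTop (𝓝 0) := by
  obtain ⟨r, hr0, hr1, hTr⟩ := exists_pow_isBigO_of_spectralRadius_lt (R := 1) (by simpa using hT)
  have hr1 : (r : ℝ) < 1 := hr1
  obtain ⟨c, -, hTc⟩ := Asymptotics.bound_of_isBigO_nat_atTop hTr
  have hTc (k : ℕ) : ‖T ^ k‖ ≤ c * r ^ k := by
    simpa using hTc (pow_ne_zero k (by simpa using hr0.ne'))
  obtain ⟨b, hb⟩ : ∃ b, ∀ k, ‖g k‖ ≤ b :=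
    ⟨_, fun k => le_ciSup hg.norm.bddAbove_range k⟩
  have hsummable : Summable fun k => c * (r : ℝ) ^ k * b :=
    ((summable_geometric_of_lt_one r.2 hr1).mul_left c).mul_right b
  have homogeneous : Tendsto (fun k => (T ^ k) (w 0)) atTop (𝓝 0) := by
    refine squeeze_zero_norm (fun k => (T ^ k).le_of_opNorm_le (hTc k) (w 0)) ?_
    simpa using ((tendsto_pow_atTop_nhds_zero_of_lt_one r.2 hr1).const_mul c).mul_const ‖w 0‖
  have forced : Tendsto (fun k => ∑ j ∈ Finset.range k, (T ^ j) (g (k - (j + 1)))) atTop (𝓝 0) := by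
    refine .congr (fun k => (sum_eq_tsum_indicator _ _).symm) ?_
    rw [← tsum_zero (L := .unconditional ℕ)]
    refine tendsto_tsum_of_dominated_convergence hsummable (fun j => ?_) (.of_forall fun k j => ?_)
    · refine squeeze_zero_norm (fun k => norm_indicator_le_norm_self _ _) ?_
      have hshift : Tendsto (fun k => g (k - (j + 1))) atTop (𝓝 0) :=
        hg.comp (tendsto_sub_atTop_nat (j + 1))
      simpa using (((T ^ j).continuous.tendsto 0).comp (by simpa using hshift)).norm
    · exact (norm_indicator_le_norm_self _ _).trans
        ((T ^ j).le_of_opNorm_le_of_le (hTc j) (hb _))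
  rw [funext (eq_pow_add_sum_of_recurrence hw)]
  simpa only [add_zero] using homogeneous.add forced

end Powers

section SchurStability

lemma ofReal_comp_mulVec {m n : Type*} [Fintype n]
    (M : Matrix m n ℝ) (v : n → ℝ) :
    Complex.ofReal ∘ (M *ᵥ v) = M.map Complex.ofReal *ᵥ (Complex.ofReal ∘ v) := by
  ext i
  simp [Matrix.mulVec, dotProduct]

lemma tendsto_ofReal_comp_iff {ι : Type*} {w : ℕ → ι → ℝ} :
    Tendsto (fun k => Complex.ofReal ∘ w k) atTop (𝓝 0) ↔ Tendsto w atTop (𝓝 0) := by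
  simp only [tendsto_pi_nhds, Pi.zero_apply, Function.comp_apply]
  exact forall_congr' fun i => by
    simpa using Filter.tendsto_ofReal_iff (f := fun k => w k i) (x := 0)

variable {ι : Type*} [Fintype ι] [DecidableEq ι]

/-- The algebra of complex matrices identified with the bounded operators on column vectors.
This gives access to spectral radii without fixing a norm on matrices. -/
def matrixCLM : Matrix ι ι ℂ ≃ₐ[ℂ] ((ι → ℂ) →L[ℂ] (ι → ℂ)) :=
  Matrix.toLinAlgEquiv'.trans (Module.End.toContinuousLinearMap (ι → ℂ))

@[simp]
lemma matrixCLM_apply (M : Matrix ι ι ℂ) (v : ι → ℂ) : matrixCLM M v = M *ᵥ v := rfl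

lemma spectralRadius_lt_iff {𝔸 : Type*} [NormedRing 𝔸] [NormedAlgebra ℂ 𝔸] [CompleteSpace 𝔸]
    {a : 𝔸} {R : NNReal} (hR : 0 < R) :
    spectralRadius ℂ a < R ↔ ∀ μ ∈ spectrum ℂ a, ‖μ‖ < R := by
  refine ⟨fun h μ hμ => ?_, fun h => ?_⟩
  · exact_mod_cast
      (le_iSup₂ (f := fun z (_ : z ∈ spectrum ℂ a) => (‖z‖₊ : ENNReal)) μ hμ).trans_lt h
  · cases subsingleton_or_nontrivial 𝔸
    · simpa using hR
    · exact spectrum.spectralRadius_lt_of_forall_lt a h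

lemma spectralRadius_matrixCLM_lt_iff {M : Matrix ι ι ℂ} {R : NNReal} (hR : 0 < R) :
    spectralRadius ℂ (matrixCLM M) < R ↔ ∀ μ ∈ spectrum ℂ M, ‖μ‖ < R := by
  rw [spectralRadius_lt_iff hR, AlgEquiv.spectrum_eq]

lemma SchurStableC.spectralRadius_matrixCLM_lt_one {M : Matrix ι ι ℂ} (hM : SchurStableC M) :
    spectralRadius ℂ (matrixCLM M) < 1 :=
  (spectralRadius_matrixCLM_lt_iff one_pos).2 hM

lemma exists_pow_apply_isBigO {M : Matrix ι ι ℂ} {R : NNReal} (hR : 0 < R)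
    (hM : ∀ μ ∈ spectrum ℂ M, ‖μ‖ < R) :
    ∃ r : NNReal, 0 < r ∧ r < R ∧
      ∀ i j, (fun k : ℕ => (M ^ k) i j) =O[atTop] fun k => (r : ℝ) ^ k := by
  obtain ⟨r, hr0, hrR, hr⟩ :=
    exists_pow_isBigO_of_spectralRadius_lt (a := matrixCLM M)
      ((spectralRadius_matrixCLM_lt_iff hR).2 hM)
  refine ⟨r, hr0, hrR, fun i j => ?_⟩
  obtain ⟨entry, hentry⟩ : ∃ entry : ((ι → ℂ) →L[ℂ] (ι → ℂ)) →L[ℂ] ℂ,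
      ∀ N : Matrix ι ι ℂ, entry (matrixCLM N) = N i j :=
    ⟨.comp (.proj i) (ContinuousLinearMap.apply ℂ (ι → ℂ) (Pi.single j 1)), by simp⟩
  simpa only [← map_pow, hentry] using (entry.isBigO_comp (fun k => matrixCLM M ^ k) atTop).trans hr

lemma mem_spectrum_iff_exists_mulVec_eq {𝕜 : Type*} [Field 𝕜] {M : Matrix ι ι 𝕜} {μ : 𝕜} :
    μ ∈ spectrum 𝕜 M ↔ ∃ v ≠ 0, M *ᵥ v = μ • v := by
  rw [← Matrix.spectrum_toLin', ← Module.End.hasEigenvalue_iff_mem_spectrum,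
    Module.End.hasEigenvalue_iff, Submodule.ne_bot_iff]
  simp [and_comm]

lemma pow_mulVec_eq_of_mulVec_eq {R : Type*} [CommSemiring R] {M : Matrix ι ι R} {v : ι → R}
    {μ : R} (h : M *ᵥ v = μ • v) (k : ℕ) : M ^ k *ᵥ v = μ ^ k • v := by
  induction k with
  | zero => simp
  | succ k ih =>
    rw [pow_succ, ← Matrix.mulVec_mulVec, h, Matrix.mulVec_smul, ih, smul_smul, pow_succ']

lemma SchurStableC.of_tendsto_pow_apply {M : Matrix ι ι ℂ}
    (hM : ∀ i j, Tendsto (fun k : ℕ => (M ^ k) i j) atTop (𝓝 0)) : SchurStableC M := by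
  intro μ hμ
  obtain ⟨v, hv, hMv⟩ := mem_spectrum_iff_exists_mulVec_eq.1 hμ
  obtain ⟨i, hi⟩ := Function.ne_iff.1 hv
  have hpow : Tendsto (fun k : ℕ => (M ^ k *ᵥ v) i) atTop (𝓝 0) := by
    simpa [Matrix.mulVec, dotProduct] using
      tendsto_finsetSum Finset.univ fun j _ => (hM i j).mul_const (v j)
  simp_rw [pow_mulVec_eq_of_mulVec_eq hMv] at hpow
  have := hpow.div_const (v i)
  simpa [mul_div_cancel_right₀ _ hi, tendsto_pow_atTop_nhds_zero_iff_norm_lt_one] using this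

lemma kronecker_pow {R κ : Type*} [CommSemiring R] [Fintype κ] [DecidableEq κ] (D : Matrix κ κ R)
    (A : Matrix ι ι R) (k : ℕ) : (D ⊗ₖ A) ^ k = (D ^ k) ⊗ₖ (A ^ k) := by
  induction k with
  | zero => simp
  | succ k ih => rw [pow_succ, ih, ← Matrix.mul_kronecker_mul, pow_succ, pow_succ]

lemma SchurStableC.kronecker {κ : Type*} [Fintype κ] [DecidableEq κ] {D : Matrix κ κ ℂ}
    {A : Matrix ι ι ℂ} (hD : SchurStableC D) (hA : ∀ μ ∈ spectrum ℂ A, ‖μ‖ ≤ 1) :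
    SchurStableC (D ⊗ₖ A) := by
  obtain ⟨r, hr0, hr1, hDr⟩ := exists_pow_apply_isBigO one_pos hD
  obtain ⟨s, -, hs, hAs⟩ := exists_pow_apply_isBigO (inv_pos.2 hr0) fun μ hμ =>
    (hA μ hμ).trans_lt (by exact_mod_cast (one_lt_inv₀ hr0).2 hr1)
  have hrs : r * s < 1 := by rwa [← lt_inv_mul_iff₀ hr0, mul_one]
  refine .of_tendsto_pow_apply fun ⟨i, i'⟩ ⟨j, j'⟩ => ?_
  simp_rw [kronecker_pow, kroneckerMap_apply]
  refine ((hDr i j).mul (hAs i' j')).trans_tendsto ?_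
  simp_rw [← mul_pow]
  exact tendsto_pow_atTop_nhds_zero_of_lt_one (by positivity) hrs

lemma SchurStable.kronecker {κ : Type*} [Fintype κ] [DecidableEq κ] {D : Matrix κ κ ℝ}
    {A : Matrix ι ι ℝ} (hD : SchurStable D) (hA : EigInClosedUnitDisc A) :
    SchurStable (D ⊗ₖ A) := by
  have hmap : (D ⊗ₖ A).map Complex.ofReal = D.map Complex.ofReal ⊗ₖ A.map Complex.ofReal := by
    ext; simp
  rw [SchurStable, hmap]
  exact SchurStableC.kronecker hD hA

lemma SchurStable.tendsto_zero_of_recurrence {M : Matrix ι ι ℝ} (hM : SchurStable M)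
    {w g : ℕ → ι → ℝ} (hg : Tendsto g atTop (𝓝 0)) (hw : ∀ k, w (k + 1) = M *ᵥ w k + g k) :
    Tendsto w atTop (𝓝 0) := by
  rw [← tendsto_ofReal_comp_iff] at hg ⊢
  refine _root_.tendsto_zero_of_recurrence (T := matrixCLM (M.map Complex.ofReal))
    (SchurStableC.spectralRadius_matrixCLM_lt_one hM) hg fun k => ?_
  rw [matrixCLM_apply, ← ofReal_comp_mulVec, hw]
  ext i
  simp

end SchurStability

section Spectrum

lemma exists_mem_roots_norm_sub_lt {𝕜 : Type*} [NormedField 𝕜] {p : Polynomial 𝕜} (hp : p.Monic)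
    (hsplits : p.Splits) {z : 𝕜} {δ : ℝ} (hδ : 0 ≤ δ) (hz : ‖p.eval z‖ < δ ^ p.natDegree) :
    ∃ w ∈ p.roots, ‖z - w‖ < δ := by
  contrapose! hz
  rw [hsplits.natDegree_eq_card_roots, hsplits.eval_eq_prod_roots_of_monic hp,
    ← Multiset.prod_replicate, ← Multiset.map_const', ← normHom_apply,
    map_multiset_prod (normHom (α := 𝕜)), Multiset.map_map]
  exact Multiset.prod_map_le_prod_map₀ _ _ (fun _ _ => hδ) hz

variable {E : Type*} [NormedAddCommGroup E] [NormedSpace ℂ E] [FiniteDimensional ℂ E]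

lemma lowerHemicontinuous_spectrum : LowerHemicontinuous fun T : E →L[ℂ] E => spectrum ℂ T := by
  have hspectrum (T : E →L[ℂ] E) (w : ℂ) :
      w ∈ spectrum ℂ T ↔ w ∈ (T : E →ₗ[ℂ] E).charpoly.roots := by
    rw [← AlgEquiv.spectrum_eq (Module.End.toContinuousLinearMap E).symm,
      Polynomial.mem_roots (LinearMap.charpoly_monic _).ne_zero]
    exact Module.End.mem_spectrum_iff_isRoot_charpoly _ _
  have hcharpoly (z : ℂ) : Continuous fun T : E →L[ℂ] E => (T : E →ₗ[ℂ] E).charpoly.eval z := by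
    simp_rw [LinearMap.eval_charpoly]
    exact (ContinuousLinearMap.continuous_det (𝕜 := ℂ) (E := E)).comp
      (f := fun T => algebraMap ℂ _ z - T) (by fun_prop)
  refine lowerHemicontinuous_iff.2 fun T => lowerHemicontinuousAt_iff.2 fun U hU ⟨z, hz, hzU⟩ => ?_
  obtain ⟨δ, hδ, hball⟩ := Metric.isOpen_iff.1 hU z hzU
  have hroot : ‖(T : E →ₗ[ℂ] E).charpoly.eval z‖ < δ ^ Module.finrank ℂ E := by
    rw [Polynomial.isRoot_of_mem_roots ((hspectrum T z).1 hz), norm_zero]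
    positivity
  filter_upwards [(hcharpoly z).norm.continuousAt.eventually_lt_const hroot] with S hS
  rw [← LinearMap.charpoly_natDegree (S : E →ₗ[ℂ] E)] at hS
  obtain ⟨w, hw, hwz⟩ := exists_mem_roots_norm_sub_lt (LinearMap.charpoly_monic _)
    (IsAlgClosed.splits _) hδ.le hS
  exact ⟨w, (hspectrum S w).2 hw, hball (by rwa [mem_ball_iff_norm, norm_sub_rev])⟩

-- Both hemicontinuities together say that eigenvalues cannot enter or leave the open unit disc
-- without meeting the unit circle.
lemma spectralRadius_lt_one_of_preconnected {X : Type*} [TopologicalSpace X] [PreconnectedSpace X]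
    {T : X → E →L[ℂ] E} (hT : Continuous T) (hcircle : ∀ x, ∀ z ∈ spectrum ℂ (T x), ‖z‖ ≠ 1)
    {x₀ : X} (hx₀ : spectralRadius ℂ (T x₀) < 1) (x : X) : spectralRadius ℂ (T x) < 1 := by
  have : CompleteSpace E := FiniteDimensional.complete ℂ E
  let S : Set X := {x | spectrum ℂ (T x) ⊆ {z | ‖z‖ < 1}}
  have hSc : Sᶜ = {x | (spectrum ℂ (T x) ∩ {z | 1 < ‖z‖}).Nonempty} := by
    ext x
    simp only [S, Set.mem_compl_iff, Set.mem_ofPred_eq, Set.not_subset, not_lt, Set.Nonempty,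
      Set.mem_inter_iff]
    exact exists_congr fun z => and_congr_right fun hz => (hcircle x z hz).symm.le_iff_lt
  have hSclosed : IsClosed S := by
    rw [← isOpen_compl_iff, hSc]
    exact (lowerHemicontinuous_iff_isOpen_inter_nonempty.1 lowerHemicontinuous_spectrum _
      (isOpen_lt continuous_const continuous_norm)).preimage hT
  have hSopen : IsOpen S := (upperHemicontinuous_iff_isOpen_preimage_Iic.1
    (upperHemicontinuous_spectrum ℂ (E →L[ℂ] E)) _
      (isOpen_lt continuous_norm continuous_const)).preimage hT
  have hmem (x : X) : spectralRadius ℂ (T x) < 1 ↔ x ∈ S := spectralRadius_lt_iff one_pos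
  rw [hmem] at hx₀ ⊢
  exact IsClopen.eq_univ ⟨hSclosed, hSopen⟩ ⟨x₀, hx₀⟩ ▸ Set.mem_univ x

end Spectrum

section Delay

variable {ι : Type*} [Fintype ι]

/-- The companion operator of the delay recurrence `w (k + κ + 1) = M *ᵥ w (k + κ) + N *ᵥ w k`,
acting on windows of `κ + 1` consecutive values listed from the oldest to the newest. -/
def delayShift (κ : ℕ) (M N : Matrix ι ι ℂ) : (Fin (κ + 1) → ι → ℂ) →L[ℂ] (Fin (κ + 1) → ι → ℂ) :=
  .pi (Fin.snoc (α := fun _ => (Fin (κ + 1) → ι → ℂ) →L[ℂ] (ι → ℂ)) (fun i => .proj i.succ)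
    ((LinearMap.toContinuousLinearMap M.mulVecLin).comp (.proj (Fin.last κ)) +
      (LinearMap.toContinuousLinearMap N.mulVecLin).comp (.proj 0)))

variable {κ : ℕ} {M N : Matrix ι ι ℂ}

@[simp]
lemma delayShift_apply_castSucc (W : Fin (κ + 1) → ι → ℂ) (i : Fin κ) :
    delayShift κ M N W i.castSucc = W i.succ := by
  simp [delayShift]

@[simp]
lemma delayShift_apply_last (W : Fin (κ + 1) → ι → ℂ) :
    delayShift κ M N W (Fin.last κ) = M *ᵥ W (Fin.last κ) + N *ᵥ W 0 := by
  simp [delayShift]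

lemma continuous_delayShift {X : Type*} [TopologicalSpace X] {M N : X → Matrix ι ι ℂ}
    (hM : Continuous M) (hN : Continuous N) : Continuous fun x => delayShift κ (M x) (N x) := by
  refine continuous_clm_apply.2 fun W => continuous_pi fun i => ?_
  cases i using Fin.lastCases with
  | last => simp only [delayShift_apply_last]; fun_prop
  | cast i => simp only [delayShift_apply_castSucc]; fun_prop

lemma mem_spectrum_of_mem_spectrum_delayShift [DecidableEq ι] {z : ℂ} (hz : z ≠ 0)
    (hspec : z ∈ spectrum ℂ (delayShift κ M N)) : z ∈ spectrum ℂ (M + (z ^ κ)⁻¹ • N) := by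
  rw [← AlgEquiv.spectrum_eq (Module.End.toContinuousLinearMap _).symm,
    ← Module.End.hasEigenvalue_iff_mem_spectrum] at hspec
  obtain ⟨W, hW, hW0⟩ := hspec.exists_hasEigenvector
  have hW (i) : delayShift κ M N W i = z • W i :=
    congrFun (Module.End.mem_eigenspace_iff.1 hW) i
  have geometric (i : Fin (κ + 1)) : W i = z ^ (i : ℕ) • W 0 := by
    induction i using Fin.induction with
    | zero => simp
    | succ i ih =>
      rw [← delayShift_apply_castSucc (M := M) (N := N) W, hW, ih, smul_smul, Fin.val_succ,
        pow_succ', Fin.val_castSucc]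
  refine mem_spectrum_iff_exists_mulVec_eq.2 ⟨W 0, fun h => hW0 (funext fun i => ?_), ?_⟩
  · rw [geometric, h, smul_zero, Pi.zero_apply]
  · have hlast := hW (Fin.last κ)
    rw [delayShift_apply_last, geometric (Fin.last κ), Fin.val_last] at hlast
    refine smul_right_injective (ι → ℂ) (pow_ne_zero κ hz) ?_
    simp only [Matrix.add_mulVec, Matrix.smul_mulVec, smul_add, smul_inv_smul₀ (pow_ne_zero κ hz),
      ← Matrix.mulVec_smul M, hlast, smul_comm z]

lemma tendsto_zero_of_delay_recurrence {w g : ℕ → ι → ℂ}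
    (hMN : spectralRadius ℂ (delayShift κ M N) < 1) (hg : Tendsto g atTop (𝓝 0))
    (hw : ∀ k, w (k + κ + 1) = M *ᵥ w (k + κ) + N *ᵥ w k + g k) : Tendsto w atTop (𝓝 0) := by
  have hg' : Tendsto (fun k => Pi.single (Fin.last κ) (g k)) atTop
      (𝓝 (0 : Fin (κ + 1) → ι → ℂ)) := by
    simpa [Function.comp_def] using
      ((continuous_single (A := fun _ => ι → ℂ) (Fin.last κ)).tendsto 0).comp hg
  have hwindow : Tendsto (fun k (i : Fin (κ + 1)) => w (k + i)) atTop (𝓝 0) := by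
    refine tendsto_zero_of_recurrence hMN hg' fun k => funext fun i => ?_
    cases i using Fin.lastCases with
    | last => simpa [add_right_comm] using hw k
    | cast i => simp [add_assoc, add_comm 1]
  simpa using tendsto_pi_nhds.1 hwindow 0

lemma tendsto_zero_of_real_delay_recurrence {M N : Matrix ι ι ℝ} {w g : ℕ → ι → ℝ}
    (hMN : spectralRadius ℂ
      (delayShift κ (M.map Complex.ofReal) (N.map Complex.ofReal)) < 1)
    (hg : Tendsto g atTop (𝓝 0))
    (hw : ∀ k, w (k + κ + 1) = M *ᵥ w (k + κ) + N *ᵥ w k + g k) : Tendsto w atTop (𝓝 0) := by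
  rw [← tendsto_ofReal_comp_iff] at hg ⊢
  refine tendsto_zero_of_delay_recurrence hMN hg fun k => ?_
  rw [← ofReal_comp_mulVec, ← ofReal_comp_mulVec, hw]
  ext i
  simp

lemma norm_one_sub_add_mul_le_one {c : ℂ} (hc : ‖c‖ ≤ 1) (t : unitInterval) :
    ‖1 - (t : ℂ) + t * c‖ ≤ 1 := by
  have hconvex : (1 - t : ℝ) • (1 : ℂ) + (t : ℝ) • c ∈ Metric.closedBall (0 : ℂ) 1 :=
    convex_closedBall 0 1 (by simp) (by simpa using hc) (unitInterval.one_minus_nonneg t)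
      (unitInterval.nonneg t) (sub_add_cancel _ _)
  simpa using hconvex

lemma spectralRadius_delayShift_lt_one [DecidableEq ι] {A E : Matrix ι ι ℂ} {ρ : ℝ} (hρ : 1 ≤ ρ)
    (hgain : ∀ s : ℂ, 3 / 4 ≤ s.re → ‖s‖ ≤ ρ → SchurStableC (A - s • E))
    (hcircle : ∀ s z : ℂ, ‖s‖ ≤ ρ → ‖z‖ = 1 → ρ * (z ^ κ).re ≤ 3 / 4 →
      z ∉ spectrum ℂ (A - s • E)) :
    spectralRadius ℂ (delayShift κ A (-((ρ : ℂ) • E))) < 1 := by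
  let T (t : unitInterval) :=
    delayShift κ (A - ((ρ * (1 - t) : ℝ) : ℂ) • E) (-(((ρ * t : ℝ) : ℂ) • E))
  have hT : Continuous T := continuous_delayShift (by fun_prop) (by fun_prop)
  have heig {t : unitInterval} {z : ℂ} (hz0 : z ≠ 0) (hz : z ∈ spectrum ℂ (T t)) :
      z ∈ spectrum ℂ (A - (ρ * (1 - t + t * (z ^ κ)⁻¹) : ℂ) • E) := by
    convert mem_spectrum_of_mem_spectrum_delayShift hz0 hz using 2
    push_cast
    module
  have hstart : spectralRadius ℂ (T 0) < 1 := by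
    refine (spectralRadius_lt_iff one_pos).2 fun z hz => ?_
    rcases eq_or_ne z 0 with rfl | hz0
    · simp
    · exact hgain ρ (by rw [Complex.ofReal_re]; linarith)
        (by simp [abs_of_pos (one_pos.trans_le hρ)]) z (by simpa using heig hz0 hz)
  have hend : T 1 = delayShift κ A (-((ρ : ℂ) • E)) := by simp [T]
  rw [← hend]
  refine spectralRadius_lt_one_of_preconnected hT (fun t z hz hz1 => ?_) hstart 1
  have hz0 : z ≠ 0 := norm_ne_zero_iff.1 (by simp [hz1])
  have hzκ : ‖z ^ κ‖ = 1 := by simp [hz1]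
  set c : ℂ := (z ^ κ)⁻¹
  have hc_norm : ‖c‖ = 1 := by simp [c, hz1]
  have hc_re : c.re = (z ^ κ).re := by simp only [c, Complex.inv_eq_conj hzκ, Complex.conj_re]
  set s : ℂ := ρ * (1 - t + t * c)
  have hs_norm : ‖s‖ ≤ ρ := by
    rw [norm_mul, Complex.norm_real, Real.norm_of_nonneg (by linarith)]
    exact mul_le_of_le_one_right (by linarith) (norm_one_sub_add_mul_le_one hc_norm.le t)
  rcases le_or_gt (ρ * (z ^ κ).re) (3 / 4) with hre | hre
  · exact hcircle s z hs_norm hz1 hre (heig hz0 hz)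
  · refine (hgain s ?_ hs_norm z (heig hz0 hz)).ne hz1
    have hs_re : s.re = (1 - t) * ρ + t * (ρ * (z ^ κ).re) := by
      simp [s, hc_re]
      ring
    nlinarith [t.2.1, t.2.2]

end Delay

section QuadraticForm

open scoped ComplexOrder MatrixOrder

variable {ι κ : Type*} [Fintype ι] [Fintype κ]

/-- The real part `Re x* M x` of the Hermitian form of `M`. -/
def quadForm (M : Matrix ι ι ℂ) (x : ι → ℂ) : ℝ := (star x ⬝ᵥ M *ᵥ x).re

@[simp]
lemma quadForm_zero_right (M : Matrix ι ι ℂ) : quadForm M 0 = 0 := by simp [quadForm]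

lemma quadForm_add_left (M N : Matrix ι ι ℂ) (x : ι → ℂ) :
    quadForm (M + N) x = quadForm M x + quadForm N x := by
  simp [quadForm, Matrix.add_mulVec]

lemma quadForm_smul (M : Matrix ι ι ℂ) (c : ℂ) (x : ι → ℂ) :
    quadForm M (c • x) = ‖c‖ ^ 2 * quadForm M x := by
  have h : star c * c = ((‖c‖ ^ 2 : ℝ) : ℂ) := by
    simpa using Complex.conj_mul' c
  rw [quadForm, star_smul, Matrix.mulVec_smul, smul_dotProduct, dotProduct_smul, smul_smul, h,
    smul_eq_mul, Complex.re_ofReal_mul, quadForm]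

lemma star_mulVec_dotProduct_mulVec (M : Matrix ι ι ℂ) (N : Matrix ι κ ℂ) (x : κ → ℂ)
    (y : ι → ℂ) : star (N *ᵥ x) ⬝ᵥ M *ᵥ y = star x ⬝ᵥ (Nᴴ * M) *ᵥ y := by
  rw [Matrix.star_mulVec, ← Matrix.dotProduct_mulVec, Matrix.mulVec_mulVec]

lemma quadForm_mulVec (M : Matrix ι ι ℂ) (N : Matrix ι κ ℂ) (x : κ → ℂ) :
    quadForm M (N *ᵥ x) = quadForm (Nᴴ * M * N) x := by
  rw [quadForm, star_mulVec_dotProduct_mulVec, Matrix.mulVec_mulVec, quadForm]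

lemma star_dotProduct_mulVec_comm {M : Matrix ι ι ℂ} (hM : M.IsHermitian) (x y : ι → ℂ) :
    star x ⬝ᵥ M *ᵥ y = star (star y ⬝ᵥ M *ᵥ x) := by
  rw [← Matrix.star_dotProduct_star, star_star, Matrix.star_mulVec, hM.eq,
    ← Matrix.dotProduct_mulVec]

lemma quadForm_congr {M : Matrix ι ι ℂ} (hM : M.IsHermitian) {x y : ι → ℂ}
    (hxy : M *ᵥ x = M *ᵥ y) : quadForm M x = quadForm M y := by
  rw [quadForm, hxy, star_dotProduct_mulVec_comm hM, hxy, Complex.star_def, Complex.conj_re,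
    quadForm]

lemma quadForm_sub {M : Matrix ι ι ℂ} (hM : M.IsHermitian) (x y : ι → ℂ) :
    quadForm M (x - y) = quadForm M x - 2 * (star y ⬝ᵥ M *ᵥ x).re + quadForm M y := by
  have h := congrArg Complex.re (star_dotProduct_mulVec_comm hM x y)
  simp only [Complex.star_def, Complex.conj_re] at h
  simp only [quadForm, star_sub, Matrix.mulVec_sub, sub_dotProduct, dotProduct_sub,
    Complex.sub_re, h]
  ring

lemma quadForm_nonneg {M : Matrix ι ι ℂ} (hM : M.PosSemidef) (x : ι → ℂ) : 0 ≤ quadForm M x :=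
  hM.re_dotProduct_nonneg x

lemma quadForm_pos {M : Matrix ι ι ℂ} (hM : M.PosSemidef) {x : ι → ℂ} (hx : M *ᵥ x ≠ 0) :
    0 < quadForm M x :=
  (Complex.pos_iff.1 ((hM.dotProduct_mulVec_nonneg x).lt_of_ne'
    ((hM.dotProduct_mulVec_zero_iff x).not.2 hx))).1

lemma two_mul_norm_star_dotProduct_mulVec_le {M : Matrix ι ι ℂ} (hM : M.PosSemidef)
    (x y : ι → ℂ) : 2 * ‖star y ⬝ᵥ M *ᵥ x‖ ≤ quadForm M x + quadForm M y := by
  obtain ⟨c, hc, hcxy⟩ := RCLike.exists_norm_eq_mul_self (star y ⬝ᵥ M *ᵥ x)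
  have hphase : (star (star c • y) ⬝ᵥ M *ᵥ x).re = ‖star y ⬝ᵥ M *ᵥ x‖ := by
    rw [star_smul, star_star, smul_dotProduct, smul_eq_mul, ← hcxy]
    exact Complex.ofReal_re _
  have hnonneg := quadForm_nonneg hM (x - star c • y)
  rw [quadForm_sub hM.isHermitian, hphase, quadForm_smul, norm_star, hc] at hnonneg
  linarith

lemma abs_quadForm_le (M : Matrix ι ι ℂ) (x : ι → ℂ) :
    |quadForm M x| ≤ (∑ i, ∑ j, ‖M i j‖) * ‖x‖ ^ 2 := by
  calc |quadForm M x| ≤ ‖∑ i, star (x i) * ∑ j, M i j * x j‖ := Complex.abs_re_le_norm _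
    _ ≤ ∑ i, ∑ j, ‖x i‖ * (‖M i j‖ * ‖x j‖) := by
      refine (norm_sum_le _ _).trans (Finset.sum_le_sum fun i _ => ?_)
      rw [norm_mul, norm_star, ← Finset.mul_sum]
      gcongr
      exact (norm_sum_le _ _).trans_eq (by simp only [norm_mul])
    _ ≤ ∑ i, ∑ j, ‖x‖ * (‖M i j‖ * ‖x‖) := by
      gcongr <;> exact norm_le_pi_norm x _
    _ = (∑ i, ∑ j, ‖M i j‖) * ‖x‖ ^ 2 := by
      simp only [Finset.sum_mul]
      congr! 2
      ring

variable [DecidableEq ι]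

lemma quadForm_one (x : ι → ℂ) : quadForm 1 x = ∑ i, ‖x i‖ ^ 2 := by
  simp only [quadForm, Matrix.one_mulVec, dotProduct, Complex.re_sum]
  refine Finset.sum_congr rfl fun i _ => ?_
  rw [Pi.star_apply, Complex.star_def, Complex.conj_mul']
  exact_mod_cast Complex.ofReal_re _

lemma quadForm_one_pos {x : ι → ℂ} (hx : x ≠ 0) : 0 < quadForm 1 x :=
  quadForm_pos .one (by rwa [Matrix.one_mulVec])

lemma sq_norm_apply_le_quadForm_one (x : ι → ℂ) (i : ι) : ‖x i‖ ^ 2 ≤ quadForm 1 x := by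
  rw [quadForm_one]
  exact Finset.single_le_sum (f := fun i => ‖x i‖ ^ 2) (fun _ _ => by positivity)
    (Finset.mem_univ i)

lemma sq_norm_le_quadForm_one (x : ι → ℂ) : ‖x‖ ^ 2 ≤ quadForm 1 x := by
  rw [← Real.le_sqrt (norm_nonneg x) (quadForm_nonneg .one x),
    pi_norm_le_iff_of_nonneg (Real.sqrt_nonneg _)]
  exact fun i => Real.le_sqrt_of_sq_le (sq_norm_apply_le_quadForm_one x i)

end QuadraticForm

section Riccati

open scoped ComplexOrder MatrixOrder

variable {ι κ : Type*} [Fintype ι] [DecidableEq ι] [Fintype κ] [DecidableEq κ]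

/-- `P ≥ 0` solves `AᴴPA − P − AᴴPB(I + BᴴPB)⁻¹BᴴPA + εI = 0`, and `K` is the associated
feedback gain `(I + BᴴPB)⁻¹BᴴPA`. The inverse is avoided so that the relation is visibly closed
in `(ε, P, K)`. -/
structure IsRiccatiPair (A : Matrix ι ι ℂ) (B : Matrix ι κ ℂ) (ε : ℝ) (P : Matrix ι ι ℂ)
    (K : Matrix κ ι ℂ) : Prop where
  posSemidef : P.PosSemidef
  gain : (1 + Bᴴ * P * B) * K = Bᴴ * P * A
  riccati : Aᴴ * P * A - P - Aᴴ * P * B * K + ε • (1 : Matrix ι ι ℂ) = 0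

namespace IsRiccatiPair

variable {A P : Matrix ι ι ℂ} {B : Matrix ι κ ℂ} {K : Matrix κ ι ℂ} {ε ρ : ℝ}

lemma eq_gain_mul_closedLoop (h : IsRiccatiPair A B ε P K) : K = Bᴴ * P * (A - B * K) := by
  rw [Matrix.mul_sub, ← h.gain, ← Matrix.mul_assoc, ← Matrix.sub_mul, add_sub_cancel_right,
    Matrix.one_mul]

lemma eq_mul_closedLoop (h : IsRiccatiPair A B 0 P K) : P = Aᴴ * P * (A - B * K) := by
  have := h.riccati
  rw [zero_smul, add_zero, sub_right_comm, sub_eq_zero] at this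
  rw [Matrix.mul_sub, ← Matrix.mul_assoc, this]

lemma quadForm_state (h : IsRiccatiPair A B ε P K) (x : ι → ℂ) :
    quadForm P (A *ᵥ x) + ε * quadForm 1 x
      = quadForm P x + quadForm (1 + Bᴴ * P * B) (K *ᵥ x) := by
  have hK : Kᴴ * (1 + Bᴴ * P * B) * K = Aᴴ * P * B * K := by
    have hR : (1 + Bᴴ * P * B)ᴴ = 1 + Bᴴ * P * B :=
      (Matrix.isHermitian_one.add (h.posSemidef.conjTranspose_mul_mul_same B).isHermitian).eq
    rw [← hR, ← Matrix.conjTranspose_mul, h.gain]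
    simp only [Matrix.conjTranspose_mul, Matrix.conjTranspose_conjTranspose,
      h.posSemidef.isHermitian.eq, Matrix.mul_assoc]
  have hε : quadForm (ε • 1) x = ε * quadForm 1 x := by simp [quadForm, Matrix.smul_mulVec]
  rw [quadForm_mulVec, quadForm_mulVec, hK, ← hε, ← quadForm_add_left, ← quadForm_add_left]
  congr 1
  rw [← sub_eq_zero, ← h.riccati]
  abel

lemma completing_square (h : IsRiccatiPair A B ε P K) (x : ι → ℂ) (w : κ → ℂ) :
    quadForm P (A *ᵥ x - B *ᵥ w) + ε * quadForm 1 x + quadForm 1 w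
      = quadForm P x + quadForm (1 + Bᴴ * P * B) (K *ᵥ x - w) := by
  have hR : (1 + Bᴴ * P * B).IsHermitian :=
    Matrix.isHermitian_one.add (h.posSemidef.conjTranspose_mul_mul_same B).isHermitian
  have hcross : star (B *ᵥ w) ⬝ᵥ P *ᵥ (A *ᵥ x) = star w ⬝ᵥ (1 + Bᴴ * P * B) *ᵥ (K *ᵥ x) := by
    rw [star_mulVec_dotProduct_mulVec, Matrix.mulVec_mulVec, Matrix.mulVec_mulVec, h.gain]
  rw [quadForm_sub h.posSemidef.isHermitian, quadForm_sub hR, hcross, quadForm_mulVec P B,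
    quadForm_add_left 1 _ w]
  linarith [h.quadForm_state x]

lemma quadForm_le_step (h : IsRiccatiPair A B ε P K) (x : ι → ℂ) (w : κ → ℂ) :
    quadForm P x ≤ quadForm P (A *ᵥ x - B *ᵥ w) + ε * quadForm 1 x + quadForm 1 w := by
  rw [h.completing_square]
  exact le_add_of_nonneg_right
    (quadForm_nonneg (.add .one (h.posSemidef.conjTranspose_mul_mul_same B)) _)

lemma quadForm_one_gain_le (h : IsRiccatiPair A B ε P K) (hε : 0 ≤ ε) (x : ι → ℂ) :
    quadForm 1 (K *ᵥ x) ≤ quadForm P x := by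
  have hsq := h.completing_square x (K *ᵥ x)
  have hP := quadForm_nonneg h.posSemidef (A *ᵥ x - B *ᵥ (K *ᵥ x))
  have hx := mul_nonneg hε (quadForm_nonneg .one x)
  rw [sub_self, quadForm_zero_right] at hsq
  linarith

theorem schurStableC_sub_smul (h : IsRiccatiPair A B ε P K) (hε : 0 < ε)
    (hsmall : ∀ w, ρ ^ 2 * quadForm (Bᴴ * P * B) w ≤ 1 / 2 * quadForm 1 w) {s : ℂ}
    (hs : 3 / 4 ≤ s.re) (hsρ : ‖s‖ ≤ ρ) : SchurStableC (A - s • (B * K)) := by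
  intro z hz
  obtain ⟨v, hv, hzv⟩ := mem_spectrum_iff_exists_mulVec_eq.1 hz
  have hdyn : A *ᵥ v - B *ᵥ (s • K *ᵥ v) = z • v := by
    rw [← hzv, Matrix.sub_mulVec, Matrix.smul_mulVec, ← Matrix.mulVec_mulVec, Matrix.mulVec_smul]
  have hsq := h.completing_square v (s • K *ᵥ v)
  have hgap : K *ᵥ v - s • K *ᵥ v = (1 - s) • K *ᵥ v := by rw [sub_smul, one_smul]
  have hnorm : ‖1 - s‖ ^ 2 = 1 - 2 * s.re + ‖s‖ ^ 2 := by
    simp only [Complex.sq_norm, Complex.normSq_apply, Complex.sub_re, Complex.sub_im,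
      Complex.one_re, Complex.one_im]
    ring
  rw [hdyn, hgap, quadForm_smul, quadForm_smul, quadForm_smul, quadForm_add_left, hnorm] at hsq
  by_contra! hz1
  set μ := quadForm 1 (K *ᵥ v)
  set β := quadForm (Bᴴ * P * B) (K *ᵥ v)
  have hμ : 0 ≤ μ := quadForm_nonneg .one _
  have hβ : 0 ≤ β := quadForm_nonneg (h.posSemidef.conjTranspose_mul_mul_same B) _
  have hgrow : quadForm P v ≤ ‖z‖ ^ 2 * quadForm P v :=
    le_mul_of_one_le_left (quadForm_nonneg h.posSemidef v) (one_le_pow₀ hz1)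
  have hmargin : (1 - 2 * s.re) * (μ + β) ≤ -(1 / 2) * (μ + β) := by gcongr; linarith
  have hsβ : ‖s‖ ^ 2 * β ≤ ρ ^ 2 * β := by gcongr
  linarith [hsmall (K *ᵥ v), mul_pos hε (quadForm_one_pos hv)]

end IsRiccatiPair

end Riccati

section RiccatiLimit

open scoped ComplexOrder MatrixOrder

variable {ι κ : Type*} [Fintype ι] [DecidableEq ι] [Fintype κ] [DecidableEq κ]
  {A P : Matrix ι ι ℂ} {B : Matrix ι κ ℂ} {K : Matrix κ ι ℂ}

lemma SchurStableC.summable_quadForm_pow {M : Matrix ι ι ℂ} (hM : SchurStableC M)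
    (Q : Matrix ι ι ℂ) (x : ι → ℂ) : Summable fun k : ℕ => quadForm Q (M ^ k *ᵥ x) := by
  obtain ⟨r, -, hr1, hr⟩ := exists_pow_isBigO_of_spectralRadius_lt (R := 1)
    (a := matrixCLM M) (by simpa using hM.spectralRadius_matrixCLM_lt_one)
  have horbit : (fun k => M ^ k *ᵥ x) =O[atTop] fun k => (r : ℝ) ^ k := by
    refine (Asymptotics.isBigO_of_le' (c := ‖x‖) _ fun k => ?_).trans hr
    rw [mul_comm, ← map_pow]
    exact (matrixCLM (M ^ k)).le_opNorm x
  have hquad : (fun k => quadForm Q (M ^ k *ᵥ x)) =O[atTop] fun k => ‖M ^ k *ᵥ x‖ ^ 2 :=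
    Asymptotics.isBigO_of_le' _ fun k => by simpa using abs_quadForm_le Q (M ^ k *ᵥ x)
  have hgeom : Summable fun k => ((r : ℝ) ^ 2) ^ k :=
    summable_geometric_of_lt_one (by positivity) (pow_lt_one₀ r.2 hr1 two_ne_zero)
  simp only [pow_right_comm _ 2] at hgeom
  exact summable_of_isBigO_nat hgeom (hquad.trans (horbit.norm_left.pow 2))

-- The optimal cost `quadForm P x` is at most the cost of the feedback `L`, which is finite.
lemma exists_quadForm_le_of_schurStableC {L : Matrix κ ι ℂ} (hL : SchurStableC (A - B * L))
    (x : ι → ℂ) :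
    ∃ c, ∀ ε ∈ Set.Icc (0 : ℝ) 1, ∀ P K, IsRiccatiPair A B ε P K → quadForm P x ≤ c := by
  set X : ℕ → ι → ℂ := fun k => (A - B * L) ^ k *ᵥ x with hX
  set cost : ℕ → ℝ := fun k => quadForm 1 (X k) + quadForm 1 (L *ᵥ X k) with hcost
  have hsummable : Summable cost := by
    simp only [hcost, quadForm_mulVec 1 L]
    exact (hL.summable_quadForm_pow 1 x).add (hL.summable_quadForm_pow _ x)
  refine ⟨∑' k, cost k, fun ε hε P K h => ?_⟩
  have hstep (k : ℕ) : quadForm P x ≤ quadForm P (X k) + ∑ j ∈ Finset.range k, cost j := by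
    induction k with
    | zero => simp [hX]
    | succ k ih =>
      have hsucc : A *ᵥ X k - B *ᵥ (L *ᵥ X k) = X (k + 1) := by
        simp only [hX, pow_succ', ← Matrix.mulVec_mulVec, Matrix.sub_mulVec]
      have hdp := h.quadForm_le_step (X k) (L *ᵥ X k)
      have hε1 := mul_le_of_le_one_left (quadForm_nonneg .one (X k)) hε.2
      rw [hsucc] at hdp
      rw [Finset.sum_range_succ]
      linarith
  have hlim := (hL.summable_quadForm_pow P x).tendsto_atTop_zero.add
    hsummable.hasSum.tendsto_sum_nat
  rw [zero_add] at hlim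
  exact ge_of_tendsto' hlim hstep

lemma isCompact_setOf_norm_apply_le {m n : Type*} (R : n → ℝ) :
    IsCompact {M : Matrix m n ℂ | ∀ i j, ‖M i j‖ ≤ R j} := by
  have hset : {M : Matrix m n ℂ | ∀ i j, ‖M i j‖ ≤ R j} =
      Set.univ.pi fun _ => Set.univ.pi fun j => Metric.closedBall 0 (R j) := by
    ext M
    change _ ↔ ∀ i ∈ Set.univ, ∀ j ∈ Set.univ, M i j ∈ Metric.closedBall 0 (R j)
    simp
  rw [hset]
  exact isCompact_univ_pi fun _ => isCompact_univ_pi fun _ => isCompact_closedBall _ _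

lemma exists_isCompact_forall_isRiccatiPair_mem {L : Matrix κ ι ℂ}
    (hL : SchurStableC (A - B * L)) :
    ∃ S : Set (Matrix ι ι ℂ × Matrix κ ι ℂ), IsCompact S ∧
      ∀ ε ∈ Set.Icc (0 : ℝ) 1, ∀ P K, IsRiccatiPair A B ε P K → (P, K) ∈ S := by
  choose c hc using fun i => exists_quadForm_le_of_schurStableC hL (Pi.single i 1)
  refine ⟨_, (isCompact_setOf_norm_apply_le fun _ => ∑ i, |c i|).prod
    (isCompact_setOf_norm_apply_le fun j => √(c j)), fun ε hε P K h => ?_⟩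
  have hc (i : ι) : quadForm P (Pi.single i 1) ≤ c i := hc i ε hε P K h
  refine ⟨fun i j => ?_, fun i j => Real.le_sqrt_of_sq_le ?_⟩
  · have hle (i : ι) : c i ≤ ∑ i, |c i| := (le_abs_self _).trans
      (Finset.single_le_sum (f := fun i => |c i|) (fun _ _ => abs_nonneg _) (Finset.mem_univ i))
    have hP := two_mul_norm_star_dotProduct_mulVec_le h.posSemidef (Pi.single j 1) (Pi.single i 1)
    simp only [← Pi.single_star, star_one, Matrix.mulVec_single_one, single_one_dotProduct,
      Matrix.col_apply] at hP
    linarith [hc i, hc j, hle i, hle j]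
  · simpa using
      (sq_norm_apply_le_quadForm_one _ i).trans ((h.quadForm_one_gain_le hε.1 _).trans (hc j))

lemma star_mem_spectrum_of_conjTranspose_mulVec_eq {M : Matrix ι ι ℂ} {μ : ℂ} {v : ι → ℂ}
    (hv : v ≠ 0) (h : Mᴴ *ᵥ v = μ • v) : star μ ∈ spectrum ℂ M := by
  have hμ : μ ∈ spectrum ℂ (star M) := mem_spectrum_iff_exists_mulVec_eq.2 ⟨v, hv, h⟩
  rwa [spectrum.map_star] at hμ

lemma exists_eigenvector_of_le_map {𝕜 E : Type*} [Field 𝕜] [IsAlgClosed 𝕜] [AddCommGroup E]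
    [Module 𝕜 E] [FiniteDimensional 𝕜 E] {f : Module.End 𝕜 E} {W : Submodule 𝕜 E} (hW : W ≠ ⊥)
    (hfW : W ≤ W.map f) : Set.InjOn f W ∧ ∃ l : 𝕜, l ≠ 0 ∧ ∃ v ∈ W, v ≠ 0 ∧ f v = l • v := by
  have hmap : W.map f = W :=
    (Submodule.eq_of_le_of_finrank_le hfW (Submodule.finrank_map_le f W)).symm
  have hmaps : ∀ v ∈ W, f v ∈ W := fun v hv => hmap ▸ Submodule.mem_map_of_mem hv
  have hsurj : Function.Surjective (f.restrict hmaps) := by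
    rintro ⟨v, hv⟩
    obtain ⟨w, hw, rfl⟩ := hfW hv
    exact ⟨⟨w, hw⟩, rfl⟩
  have hinj := LinearMap.injective_iff_surjective.2 hsurj
  have := Submodule.nontrivial_iff_ne_bot.2 hW
  obtain ⟨l, hl⟩ := Module.End.exists_eigenvalue (f.restrict hmaps)
  obtain ⟨v, hv⟩ := hl.exists_hasEigenvector
  refine ⟨fun x hx y hy hxy => congrArg Subtype.val (@hinj ⟨x, hx⟩ ⟨y, hy⟩ (Subtype.ext hxy)),
    l, ?_, v, v.2, by simpa using hv.2, congrArg Subtype.val hv.apply_eq_smul⟩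
  rintro rfl
  exact hv.2 (hinj (by simpa using hv.apply_eq_smul))

namespace IsRiccatiPair

/- With `ε = 0` the Riccati equation reads `P = Aᴴ P (A − BK)`, so `Aᴴ` permutes the range
of `P`. -/
lemma exists_left_eigenvector (h : IsRiccatiPair A B 0 P K) (hP : P ≠ 0) :
    ∃ l : ℂ, l ≠ 0 ∧ ∃ w, P *ᵥ w ≠ 0 ∧ Aᴴ *ᵥ (P *ᵥ w) = l • P *ᵥ w ∧
      P *ᵥ ((A - B * K) *ᵥ w) = l⁻¹ • P *ᵥ w := by
  have hP_mulVec (w : ι → ℂ) : P *ᵥ w = Aᴴ *ᵥ P *ᵥ (A - B * K) *ᵥ w := by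
    simp only [Matrix.mulVec_mulVec, ← h.eq_mul_closedLoop, ← Matrix.mul_assoc]
  obtain ⟨hinj, l, hl, _, ⟨w, rfl⟩, hPw, hAPw⟩ :=
    exists_eigenvector_of_le_map (f := Aᴴ.mulVecLin) (W := LinearMap.range P.mulVecLin)
      (fun hbot => hP (Matrix.toLin'.map_eq_zero_iff.1 (LinearMap.range_eq_bot.1 hbot)))
      (by rintro _ ⟨w, rfl⟩; exact ⟨_, ⟨_, rfl⟩, (hP_mulVec w).symm⟩)
  refine ⟨l, hl, w, hPw, hAPw, hinj ⟨_, rfl⟩ (Submodule.smul_mem _ _ ⟨_, rfl⟩) ?_⟩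
  rw [map_smul]
  change _ = l⁻¹ • Aᴴ.mulVecLin (P.mulVecLin w)
  rw [hAPw, inv_smul_smul₀ hl]
  exact (hP_mulVec w).symm

/- An eigenvector `P w` of `Aᴴ` balances the cost as `|l|⁻² w*Pw + |Kw|² = w*Pw`. Since `|l| ≤ 1`,
this forces `|l| = 1` and `Kw = 0`: an uncontrollable mode on the unit circle. -/
lemma eq_zero (h : IsRiccatiPair A B 0 P K) (hA : ∀ μ ∈ spectrum ℂ A, ‖μ‖ ≤ 1)
    {L : Matrix κ ι ℂ} (hL : SchurStableC (A - B * L)) : P = 0 ∧ K = 0 := by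
  suffices hP : P = 0 from ⟨hP, by simpa [hP] using h.gain⟩
  by_contra hP
  obtain ⟨l, hl, w, hPw, hAPw, hPcl⟩ := h.exists_left_eigenvector hP
  have hl1 : 1 ≤ ‖l⁻¹‖ := by
    rw [norm_inv]
    exact (one_le_inv₀ (norm_pos_iff.2 hl)).2
      (by simpa using hA _ (star_mem_spectrum_of_conjTranspose_mulVec_eq hPw hAPw))
  have hpos : 0 < quadForm P w := quadForm_pos h.posSemidef hPw
  have hbalance : ‖l⁻¹‖ ^ 2 * quadForm P w + quadForm 1 (K *ᵥ w) = quadForm P w := by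
    have hsq := h.completing_square w (K *ᵥ w)
    rwa [sub_self, zero_mul, add_zero, quadForm_zero_right, add_zero, Matrix.mulVec_mulVec,
      ← Matrix.sub_mulVec, quadForm_congr h.posSemidef.isHermitian
        (hPcl.trans (Matrix.mulVec_smul _ _ _).symm), quadForm_smul] at hsq
  have hKw : K *ᵥ w = 0 := by
    by_contra hKw
    have := le_mul_of_one_le_left hpos.le (one_le_pow₀ hl1 (n := 2))
    linarith [quadForm_one_pos hKw]
  have hBPw : Bᴴ *ᵥ P *ᵥ w = 0 := by
    rw [h.eq_gain_mul_closedLoop, ← Matrix.mulVec_mulVec, ← Matrix.mulVec_mulVec, hPcl,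
      Matrix.mulVec_smul] at hKw
    exact (smul_eq_zero.1 hKw).resolve_left (inv_ne_zero hl)
  have hcl : (A - B * L)ᴴ *ᵥ (P *ᵥ w) = l • P *ᵥ w := by
    rw [Matrix.conjTranspose_sub, Matrix.conjTranspose_mul, Matrix.sub_mulVec, hAPw,
      ← Matrix.mulVec_mulVec, hBPw, Matrix.mulVec_zero, sub_zero]
  have hl2 : 1 < ‖l⁻¹‖ := by
    rw [norm_inv]
    exact (one_lt_inv₀ (norm_pos_iff.2 hl)).2
      (by simpa using hL _ (star_mem_spectrum_of_conjTranspose_mulVec_eq hPw hcl))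
  have := lt_mul_of_one_lt_left hpos (one_lt_pow₀ hl2 two_ne_zero)
  linarith [quadForm_nonneg .one (K *ᵥ w)]

end IsRiccatiPair

lemma isClosed_setOf_isRiccatiPair (A : Matrix ι ι ℂ) (B : Matrix ι κ ℂ) :
    IsClosed {p : ℝ × Matrix ι ι ℂ × Matrix κ ι ℂ | IsRiccatiPair A B p.1 p.2.1 p.2.2} := by
  have hset : {p : ℝ × Matrix ι ι ℂ × Matrix κ ι ℂ | IsRiccatiPair A B p.1 p.2.1 p.2.2} =
      {p | p.2.1ᴴ = p.2.1} ∩ {p | ∀ x, 0 ≤ star x ⬝ᵥ p.2.1 *ᵥ x} ∩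
      {p | (1 + Bᴴ * p.2.1 * B) * p.2.2 = Bᴴ * p.2.1 * A} ∩
      {p | Aᴴ * p.2.1 * A - p.2.1 - Aᴴ * p.2.1 * B * p.2.2 + p.1 • (1 : Matrix ι ι ℂ) = 0} := by
    ext p
    exact ⟨fun h => ⟨⟨⟨h.posSemidef.isHermitian, h.posSemidef.dotProduct_mulVec_nonneg⟩, h.gain⟩,
      h.riccati⟩, fun h => ⟨.of_dotProduct_mulVec_nonneg h.1.1.1 h.1.1.2, h.1.2, h.2⟩⟩
  rw [hset]
  refine (((isClosed_eq ?_ ?_).inter ?_).inter (isClosed_eq ?_ ?_)).inter (isClosed_eq ?_ ?_)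
  case refine_3 =>
    simp only [Set.ofPred_forall]
    exact isClosed_iInter fun x => isClosed_le (by fun_prop) (by fun_prop)
  all_goals fun_prop

lemma eventually_forall_isRiccatiPair (hA : ∀ μ ∈ spectrum ℂ A, ‖μ‖ ≤ 1)
    {L : Matrix κ ι ℂ} (hL : SchurStableC (A - B * L)) {U : Set (Matrix ι ι ℂ × Matrix κ ι ℂ)}
    (hU : U ∈ 𝓝 0) : ∀ᶠ ε in 𝓝[>] 0, ∀ P K, IsRiccatiPair A B ε P K → (P, K) ∈ U := by
  obtain ⟨S, hS, hmem⟩ := exists_isCompact_forall_isRiccatiPair_mem hL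
  have hclosed := isClosed_setOf_isRiccatiPair A B
  have hfar : ∀ p ∈ S \ interior U, ∀ᶠ q : ℝ × Matrix ι ι ℂ × Matrix κ ι ℂ in 𝓝 (0, p),
      ¬ IsRiccatiPair A B q.1 q.2.1 q.2.2 := fun p hp => by
    refine hclosed.isOpen_compl.mem_nhds fun h => hp.2 ?_
    have h : IsRiccatiPair A B 0 p.1 p.2 := h
    obtain ⟨hP, hK⟩ := h.eq_zero hA hL
    rw [show p = 0 from Prod.ext hP hK]
    exact mem_interior_iff_mem_nhds.2 hU
  have hε := (hS.diff isOpen_interior).eventually_forall_of_forall_eventually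
    (P := fun ε p => ¬ IsRiccatiPair A B ε p.1 p.2) hfar
  filter_upwards [nhdsWithin_le_nhds hε, Ioc_mem_nhdsGT one_pos] with ε hε hε01 P K h
  by_contra hU
  exact hε (P, K) ⟨hmem ε ⟨hε01.1.le, hε01.2⟩ P K h, fun hi => hU (interior_subset hi)⟩ h

end RiccatiLimit

section LowGain

open scoped ComplexOrder MatrixOrder

lemma ofReal_map_conjTranspose {ι κ : Type*} (M : Matrix ι κ ℝ) :
    (M.map Complex.ofReal)ᴴ = Mᵀ.map Complex.ofReal := by
  ext
  simp

lemma ofReal_map_mul {ι κ l : Type*} [Fintype κ] (M : Matrix ι κ ℝ) (N : Matrix κ l ℝ) :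
    (M * N).map Complex.ofReal = M.map Complex.ofReal * N.map Complex.ofReal :=
  Matrix.map_mul (f := Complex.ofRealHom)

lemma posSemidef_map_ofReal {ι : Type*} [Finite ι] {P : Matrix ι ι ℝ} (hP : P.PosSemidef) :
    (P.map Complex.ofReal).PosSemidef := by
  have := Fintype.ofFinite ι
  obtain ⟨S, rfl⟩ := CStarAlgebra.nonneg_iff_eq_star_mul_self.1 hP.nonneg
  rw [ofReal_map_mul, Matrix.star_eq_conjTranspose, Matrix.conjTranspose_eq_transpose_of_trivial,
    ← ofReal_map_conjTranspose]
  exact Matrix.posSemidef_conjTranspose_mul_self _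

variable {n m : ℕ} {A P : Matrix (Fin n) (Fin n) ℝ} {B : Matrix (Fin n) (Fin m) ℝ} {ε : ℝ}

lemma one_add_mul_gainK (hP : P.PosSemidef) :
    (1 + Bᵀ * P * B) * gainK A B P = Bᵀ * P * A := by
  have hR : (1 + Bᵀ * P * B).PosDef :=
    Matrix.PosDef.one.add_posSemidef (by simpa using hP.conjTranspose_mul_mul_same B)
  rw [gainK, Matrix.mul_nonsing_inv_cancel_left _ _ ((Matrix.isUnit_iff_isUnit_det _).1 hR.isUnit)]

lemma IsDARESol.isRiccatiPair (h : IsDARESol A B ε P) :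
    IsRiccatiPair (A.map Complex.ofReal) (B.map Complex.ofReal) ε (P.map Complex.ofReal)
      ((gainK A B P).map Complex.ofReal) := by
  have hgain := congrArg (Matrix.map · Complex.ofReal)
    (one_add_mul_gainK (A := A) (B := B) h.1.posSemidef)
  have hdare : Aᵀ * P * A - P - Aᵀ * P * B * gainK A B P
      + ε • (1 : Matrix (Fin n) (Fin n) ℝ) = 0 := by
    simpa only [gainK, Matrix.mul_assoc] using h.2
  replace hdare := congrArg (Matrix.map · Complex.ofReal) hdare
  refine ⟨posSemidef_map_ofReal h.1.posSemidef, ?_, ?_⟩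
  · simpa [ofReal_map_mul, Matrix.map_add, Matrix.map_one, ofReal_map_conjTranspose] using hgain
  · simpa [ofReal_map_mul, Matrix.map_add, Matrix.map_sub, ofReal_map_conjTranspose,
      Matrix.map_smul'] using hdare

lemma eventually_forall_mul_quadForm_le {ι κ : Type*} [Fintype ι] [Fintype κ] [DecidableEq κ]
    (B : Matrix ι κ ℂ) (c : ℝ) {δ : ℝ} (hδ : 0 < δ) :
    ∀ᶠ P in 𝓝 (0 : Matrix ι ι ℂ), ∀ w, c * quadForm (Bᴴ * P * B) w ≤ δ * quadForm 1 w := by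
  have hcont : Continuous fun P : Matrix ι ι ℂ => |c| * ∑ i, ∑ j, ‖(Bᴴ * P * B) i j‖ := by
    fun_prop
  filter_upwards [hcont.continuousAt.eventually_lt_const (by simpa using hδ)] with P hP w
  calc c * quadForm (Bᴴ * P * B) w
      ≤ |c| * |quadForm (Bᴴ * P * B) w| := by rw [← abs_mul]; exact le_abs_self _
    _ ≤ |c| * ((∑ i, ∑ j, ‖(Bᴴ * P * B) i j‖) * ‖w‖ ^ 2) := by gcongr; exact abs_quadForm_le _ w
    _ ≤ δ * ‖w‖ ^ 2 := by rw [← mul_assoc]; gcongr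
    _ ≤ δ * quadForm 1 w := by gcongr; exact sq_norm_le_quadForm_one w

lemma eventually_forall_notMem_spectrum {ι : Type*} [Fintype ι] [DecidableEq ι]
    {A : Matrix ι ι ℂ} {Z : Set ℂ} (hZ : IsCompact Z) (hA : ∀ z ∈ Z, z ∉ spectrum ℂ A) (ρ : ℝ) :
    ∀ᶠ E in 𝓝 (0 : Matrix ι ι ℂ), ∀ z ∈ Z, ∀ s : ℂ, ‖s‖ ≤ ρ → z ∉ spectrum ℂ (A - s • E) := by
  have hdet (M : Matrix ι ι ℂ) (z : ℂ) :
      z ∉ spectrum ℂ M ↔ (algebraMap ℂ (Matrix ι ι ℂ) z - M).det ≠ 0 := by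
    rw [spectrum.notMem_iff, Matrix.isUnit_iff_isUnit_det, isUnit_iff_ne_zero]
  have hcont : Continuous fun p : Matrix ι ι ℂ × ℂ × ℂ =>
      (algebraMap ℂ (Matrix ι ι ℂ) p.2.1 - (A - p.2.2 • p.1)).det := by
    fun_prop
  have hlocal : ∀ p ∈ Z ×ˢ Metric.closedBall (0 : ℂ) ρ,
      ∀ᶠ q : Matrix ι ι ℂ × ℂ × ℂ in 𝓝 (0, p), q.2.1 ∉ spectrum ℂ (A - q.2.2 • q.1) := by
    intro p hp
    simp_rw [hdet]
    exact hcont.continuousAt.eventually_ne (by simpa [← hdet] using hA _ hp.1)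
  have huniform := (hZ.prod (isCompact_closedBall (0 : ℂ) ρ)).eventually_forall_of_forall_eventually
    (P := fun E p => p.1 ∉ spectrum ℂ (A - p.2 • E)) hlocal
  filter_upwards [huniform] with E hE z hz s hs
  exact hE (z, s) ⟨hz, by simpa using hs⟩

lemma abs_arg_le_omegaMax {z : ℂ} (hz : ‖z‖ = 1) (hzA : z ∈ spectrum ℂ (A.map Complex.ofReal)) :
    |z.arg| ≤ omegaMax A := by
  have hA : ¬ SchurStable A := fun h => (h z hzA).ne hz
  have hroot {w : ℂ} (hw : w ∈ spectrum ℂ (A.map Complex.ofReal)) :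
      (w • (1 : Matrix (Fin n) (Fin n) ℂ) - A.map Complex.ofReal).det = 0 := by
    rwa [spectrum.mem_iff, Matrix.isUnit_iff_isUnit_det, isUnit_iff_ne_zero, not_not,
      Algebra.algebraMap_eq_smul_one] at hw
  have hconj : star z ∈ spectrum ℂ (A.map Complex.ofReal) := by
    obtain ⟨v, hv, hzv⟩ := mem_spectrum_iff_exists_mulVec_eq.1 hzA
    refine mem_spectrum_iff_exists_mulVec_eq.2 ⟨star v, star_ne_zero.2 hv, ?_⟩
    rw [← star_smul, ← hzv, Matrix.star_mulVec, ofReal_map_conjTranspose, Matrix.transpose_map,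
      Matrix.vecMul_transpose]
  have hz_exp : Complex.exp (z.arg * Complex.I) = z := by
    simpa [hz] using Complex.norm_mul_exp_arg_mul_I z
  rw [omegaMax, if_neg hA]
  refine le_csSup ⟨Real.pi, fun ω hω => hω.1.2⟩ ⟨⟨abs_nonneg _, Complex.abs_arg_le_pi z⟩, hroot ?_⟩
  rcases abs_choice z.arg with h | h
  · rwa [h, hz_exp]
  · rw [h]
    convert hconj
    conv_rhs => rw [← hz_exp, Complex.star_def, ← Complex.exp_conj]
    simp

lemma cos_omegaMax_le_re_pow {κ κbar : ℕ} (hκ : κ ≤ κbar)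
    (hκbar : κbar * omegaMax A < Real.pi / 2) {z : ℂ} (hz : ‖z‖ = 1)
    (hzA : z ∈ spectrum ℂ (A.map Complex.ofReal)) :
    Real.cos (κbar * omegaMax A) ≤ (z ^ κ).re := by
  have hre : (z ^ κ).re = Real.cos (κ * |z.arg|) := by
    rw [← Nat.abs_cast, ← abs_mul, Real.cos_abs, ← Complex.exp_ofReal_mul_I_re, Complex.ofReal_mul,
      mul_assoc, Complex.ofReal_natCast, Complex.exp_nat_mul]
    simpa [hz] using congrArg (fun z => (z ^ κ).re) (Complex.norm_mul_exp_arg_mul_I z).symm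
  rw [hre]
  refine Real.cos_le_cos_of_nonneg_of_le_pi (by positivity) (by linarith [Real.pi_pos]) ?_
  gcongr
  exact abs_arg_le_omegaMax hz hzA

lemma omegaMax_nonneg (A : Matrix (Fin n) (Fin n) ℝ) : 0 ≤ omegaMax A := by
  rw [omegaMax]
  split_ifs
  exacts [le_rfl, Real.sSup_nonneg fun ω hω => hω.1.1]

lemma eventually_forall_unitCircle_notMem_spectrum {κbar : ℕ}
    (hκbar : κbar * omegaMax A < Real.pi / 2) {ρ : ℝ} (hρ : 0 ≤ ρ)
    (hρcos : 3 / 4 < ρ * Real.cos (κbar * omegaMax A)) :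
    ∀ᶠ E in 𝓝 0, ∀ κ ≤ κbar, ∀ s z : ℂ, ‖s‖ ≤ ρ → ‖z‖ = 1 → ρ * (z ^ κ).re ≤ 3 / 4 →
      z ∉ spectrum ℂ (A.map Complex.ofReal - s • E) := by
  let Z (κ : ℕ) : Set ℂ := {z | ‖z‖ = 1} ∩ {z | ρ * (z ^ κ).re ≤ 3 / 4}
  have hZ (κ : ℕ) : IsCompact (Z κ) := by
    refine (isCompact_sphere (0 : ℂ) 1).of_isClosed_subset ?_ fun z hz => by simpa using hz.1
    exact (isClosed_eq continuous_norm continuous_const).inter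
      (isClosed_le (by fun_prop) continuous_const)
  have hZA {κ : ℕ} (hκ : κ ≤ κbar) {z : ℂ} (hz : z ∈ Z κ) :
      z ∉ spectrum ℂ (A.map Complex.ofReal) := fun hzA =>
    (hρcos.trans_le (mul_le_mul_of_nonneg_left
      (cos_omegaMax_le_re_pow hκ hκbar hz.1 hzA) hρ)).not_ge hz.2
  filter_upwards [(Filter.eventually_all_finite (Set.finite_Iic κbar)).2 fun κ hκ =>
    eventually_forall_notMem_spectrum (hZ κ) (fun _ => hZA hκ) ρ] with E hE κ hκ s z hs hz hzκ
  exact hE κ hκ z ⟨hz, hzκ⟩ s hs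

theorem exists_forall_spectralRadius_delayShift_lt_one (hAB : Stabilizable A B)
    (hA : EigInClosedUnitDisc A) {κbar : ℕ} (hκbar : κbar * omegaMax A < Real.pi / 2) :
    ∃ ρ : ℝ, 1 ≤ ρ ∧ ∃ εstar > (0 : ℝ), ∀ ε ∈ Set.Ioc 0 εstar, ∀ P, IsDARESol A B ε P →
      ∀ κ ≤ κbar, spectralRadius ℂ (delayShift κ (A.map Complex.ofReal)
        ((-(B * ρ • gainK A B P)).map Complex.ofReal)) < 1 := by
  have hω : 0 ≤ κbar * omegaMax A := mul_nonneg κbar.cast_nonneg (omegaMax_nonneg A)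
  have hcos : 0 < Real.cos (κbar * omegaMax A) :=
    Real.cos_pos_of_mem_Ioo ⟨by linarith [Real.pi_pos], hκbar⟩
  set ρ := (Real.cos (κbar * omegaMax A))⁻¹
  have hρ : 1 ≤ ρ := (one_le_inv₀ hcos).2 (Real.cos_le_one _)
  obtain ⟨L, hL⟩ := hAB
  have hL : SchurStableC (A.map Complex.ofReal - B.map Complex.ofReal * L.map Complex.ofReal) := by
    simpa [SchurStable, Matrix.map_sub, ofReal_map_mul] using hL
  have hsmall := eventually_forall_mul_quadForm_le (B.map Complex.ofReal) (ρ ^ 2) one_half_pos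
  have hBK : Continuous fun p : Matrix (Fin n) (Fin n) ℂ × Matrix (Fin m) (Fin n) ℂ =>
      B.map Complex.ofReal * p.2 := by fun_prop
  have hcircle := (hBK.tendsto' 0 0 (by simp)).eventually
    (eventually_forall_unitCircle_notMem_spectrum hκbar (zero_le_one.trans hρ)
      (by rw [inv_mul_cancel₀ hcos.ne']; norm_num))
  obtain ⟨εstar, hεstar, hP_small⟩ := mem_nhdsGT_iff_exists_Ioc_subset.1 <|
    eventually_forall_isRiccatiPair hA hL ((hsmall.prod_inl_nhds 0).and hcircle)
  refine ⟨ρ, hρ, εstar, hεstar, fun ε hε P hP κ hκ => ?_⟩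
  obtain ⟨hsmall, hcircle⟩ := hP_small hε _ _ hP.isRiccatiPair
  have hmap : (-(B * ρ • gainK A B P)).map Complex.ofReal
      = -((ρ : ℂ) • (B.map Complex.ofReal * (gainK A B P).map Complex.ofReal)) := by
    rw [← ofReal_map_mul]
    ext
    simp
  rw [hmap]
  exact spectralRadius_delayShift_lt_one hρ
    (fun s => hP.isRiccatiPair.schurStableC_sub_smul hε.1 hsmall) (hcircle κ hκ)

end LowGain

section Network

variable {N : ℕ} {a : Fin N → Fin N → ℝ} {ι : Fin N → ℝ}

/-- The normalized network coupling `X ↦ (2 + d_in(i))⁻¹ Σ_j ℓ̄_{ij} X_j` seen by agent `i`. -/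
def netCoupling {V : Type*} [AddCommGroup V] [Module ℝ V] (a : Fin N → Fin N → ℝ) (ι : Fin N → ℝ)
    (i : Fin N) : (Fin N → V) →ₗ[ℝ] V :=
  (2 + dIn a i)⁻¹ • ∑ j, lapLbar a ι i j • LinearMap.proj j

lemma netCoupling_apply {V : Type*} [AddCommGroup V] [Module ℝ V] (i : Fin N) (X : Fin N → V) :
    netCoupling a ι i X = (2 + dIn a i)⁻¹ • ∑ j, lapLbar a ι i j • X j := by
  simp [netCoupling]

lemma mulVec_netCoupling {m n : Type*} [Fintype n] (M : Matrix m n ℝ) (i : Fin N)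
    (X : Fin N → n → ℝ) :
    M *ᵥ netCoupling a ι i X = netCoupling a ι i fun j => M *ᵥ X j := by
  simp only [netCoupling_apply, Matrix.mulVec_smul, Matrix.mulVec_sum]

lemma relative_measurement_eq_netCoupling {V : Type*} [AddCommGroup V] [Module ℝ V]
    (ha : ∀ i, a i i = 0) (i : Fin N) (Y : Fin N → V) (r : V) :
    (2 + dIn a i)⁻¹ • (∑ j, a i j • (Y i - Y j) + ι i • (Y i - r))
      = netCoupling a ι i fun j => Y j - r := by
  have hentry (j : Fin N) : lapLbar a ι i j = (if i = j then dIn a i + ι i else 0) - a i j := by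
    rcases eq_or_ne i j with rfl | hij
    · simp [lapLbar, lapL, ha]
    · simp [lapLbar, lapL, hij]
  have hdeg : ∑ j, a i j = dIn a i := rfl
  simp only [netCoupling_apply, hentry, sub_smul, ite_smul, zero_smul, smul_sub,
    Finset.sum_sub_distrib, Finset.sum_ite_eq, Finset.mem_univ, if_true, ← Finset.sum_smul, hdeg,
    add_smul, smul_add]
  abel

lemma DbarM_apply (ha : ∀ i, 2 + dIn a i ≠ 0) (i j : Fin N) :
    DbarM a ι i j = (1 : Matrix (Fin N) (Fin N) ℝ) i j - (2 + dIn a i)⁻¹ * lapLbar a ι i j := by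
  have hdiag : (2 : ℝ) • (1 : Matrix (Fin N) (Fin N) ℝ) + Matrix.diagonal (dIn a)
      = Matrix.diagonal fun i => 2 + dIn a i := by
    rw [Matrix.smul_one_eq_diagonal, Matrix.diagonal_add]
  have hinv : (Matrix.diagonal fun i => 2 + dIn a i)⁻¹
      = Matrix.diagonal fun i => (2 + dIn a i)⁻¹ :=
    Matrix.inv_eq_right_inv (by simp [ha])
  rw [DbarM, hdiag, hinv, Matrix.sub_apply, Matrix.diagonal_mul]

lemma DbarM_kronecker_mulVec_apply {n : Type*} [Fintype n] (ha : ∀ i, 2 + dIn a i ≠ 0)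
    (A : Matrix n n ℝ) (X : Fin N → n → ℝ) (p : Fin N × n) :
    ((DbarM a ι ⊗ₖ A) *ᵥ Function.uncurry X) p = (A *ᵥ (X p.1 - netCoupling a ι p.1 X)) p.2 := by
  have hsum : ((DbarM a ι ⊗ₖ A) *ᵥ Function.uncurry X) p
      = ∑ j, DbarM a ι p.1 j * (A *ᵥ X j) p.2 := by
    simp only [Matrix.mulVec, dotProduct, Fintype.sum_prod_type, kroneckerMap_apply,
      Finset.mul_sum, mul_assoc, Function.uncurry]
  rw [hsum, Matrix.mulVec_sub, mulVec_netCoupling, netCoupling_apply]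
  simp [DbarM_apply ha, sub_mul, Finset.sum_sub_distrib, Matrix.one_apply, Finset.mul_sum,
    mul_assoc]

lemma tendsto_zero_of_network_recurrence {n : Type*} [Fintype n] [DecidableEq n] {A : Matrix n n ℝ}
    (ha : ∀ i, 2 + dIn a i ≠ 0) (hD : SchurStable (DbarM a ι)) (hA : EigInClosedUnitDisc A)
    {w g : ℕ → Fin N → n → ℝ} (hg : ∀ i, Tendsto (fun k => g k i) atTop (𝓝 0))
    (hw : ∀ i k, w (k + 1) i = A *ᵥ (w k i - netCoupling a ι i (w k)) + g k i) (i : Fin N) :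
    Tendsto (fun k => w k i) atTop (𝓝 0) := by
  have hstack : Tendsto (fun k => Function.uncurry (w k)) atTop (𝓝 0) := by
    refine (hD.kronecker hA).tendsto_zero_of_recurrence (g := fun k => Function.uncurry (g k))
      (tendsto_pi_nhds.2 fun p => tendsto_pi_nhds.1 (hg p.1) p.2) fun k => funext fun p => ?_
    rw [Pi.add_apply, DbarM_kronecker_mulVec_apply ha]
    exact congrFun (hw p.1 k) p.2
  exact tendsto_pi_nhds.2 fun b => tendsto_pi_nhds.1 hstack (i, b)

variable {n m q : Type*} [Fintype n] [Fintype m] [Fintype q]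

/-- The reference `xr`, the agents `x`, the observers `xhat` and the internal states `χ` solve the
closed-loop equations with output-injection gain `F` and feedback gain `G`. The reference runs on
the actual time `k`, whereas agent signals have their time shifted by `κbar`. -/
structure IsClosedLoop (A : Matrix n n ℝ) (B : Matrix n m ℝ) (C : Matrix q n ℝ) (F : Matrix n q ℝ)
    (G : Matrix m n ℝ) (a : Fin N → Fin N → ℝ) (ι : Fin N → ℝ) (κbar : ℕ) (κ : Fin N → ℕ)
    (xr : ℕ → n → ℝ) (yr : ℕ → q → ℝ) (x xhat χ : Fin N → ℕ → n → ℝ) (y : Fin N → ℕ → q → ℝ)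
    (u : Fin N → ℕ → m → ℝ) : Prop where
  reference_succ (k : ℕ) : xr (k + 1) = A *ᵥ xr k
  reference_output (k : ℕ) : yr k = C *ᵥ xr k
  output (i : Fin N) (k : ℕ) : y i k = C *ᵥ x i k
  state_succ (i : Fin N) (k : ℕ) :
    x i (k + κbar + 1) = A *ᵥ x i (k + κbar) + B *ᵥ u i (k + κbar - κ i)
  observer_succ (i : Fin N) (k : ℕ) :
    xhat i (k + κbar + 1) = A *ᵥ xhat i (k + κbar)
      + B *ᵥ ((2 + dIn a i)⁻¹ • ∑ j, lapLbar a ι i j • u j (k + κbar - κ j))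
      + F *ᵥ ((2 + dIn a i)⁻¹ • (∑ j, a i j • (y i (k + κbar) - y j (k + κbar))
          + ι i • (y i (k + κbar) - yr k)) - C *ᵥ xhat i (k + κbar))
  internal_succ (i : Fin N) (k : ℕ) :
    χ i (k + κbar + 1) = A *ᵥ χ i (k + κbar) + B *ᵥ u i (k + κbar - κ i)
      + A *ᵥ xhat i (k + κbar)
      - A *ᵥ ((2 + dIn a i)⁻¹ • ∑ j, lapLbar a ι i j • χ j (k + κbar))
  input (i : Fin N) (k : ℕ) : u i k = -(G *ᵥ χ i k)

namespace IsClosedLoop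

variable {A : Matrix n n ℝ} {B : Matrix n m ℝ} {C : Matrix q n ℝ} {F : Matrix n q ℝ}
  {G : Matrix m n ℝ} {κbar : ℕ} {κ : Fin N → ℕ} {xr : ℕ → n → ℝ} {yr : ℕ → q → ℝ}
  {x xhat χ : Fin N → ℕ → n → ℝ} {y : Fin N → ℕ → q → ℝ} {u : Fin N → ℕ → m → ℝ}

lemma error_succ (h : IsClosedLoop A B C F G a ι κbar κ xr yr x xhat χ y u) (i : Fin N) (k : ℕ) :
    x i (k + 1 + κbar) - xr (k + 1)
      = A *ᵥ (x i (k + κbar) - xr k) + B *ᵥ u i (k + κbar - κ i) := by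
  rw [add_right_comm, h.state_succ, h.reference_succ, Matrix.mulVec_sub]
  abel

variable [DecidableEq n]

lemma tendsto_observer_error (h : IsClosedLoop A B C F G a ι κbar κ xr yr x xhat χ y u)
    (ha : ∀ i, a i i = 0) (hF : SchurStable (A - F * C)) (i : Fin N) :
    Tendsto (fun k => xhat i (k + κbar) - netCoupling a ι i fun j => x j (k + κbar) - xr k)
      atTop (𝓝 0) := by
  refine hF.tendsto_zero_of_recurrence (g := 0) tendsto_const_nhds fun k => ?_
  have hmeas := relative_measurement_eq_netCoupling (ι := ι) ha i (fun j => C *ᵥ x j (k + κbar))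
    (C *ᵥ xr k)
  simp only [← Matrix.mulVec_sub, ← mulVec_netCoupling] at hmeas
  have hcoupling : (netCoupling a ι i fun j => x j (k + 1 + κbar) - xr (k + 1))
      = A *ᵥ (netCoupling a ι i fun j => x j (k + κbar) - xr k)
        + B *ᵥ netCoupling a ι i fun j => u j (k + κbar - κ j) := by
    simp only [h.error_succ, mulVec_netCoupling, ← map_add]
    rfl
  rw [hcoupling, add_right_comm, h.observer_succ]
  simp only [h.output, h.reference_output, ← Matrix.mulVec_sub, hmeas, ← netCoupling_apply,
    Matrix.sub_mulVec, ← Matrix.mulVec_mulVec, Pi.zero_apply]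
  simp only [Matrix.mulVec_sub]
  abel

lemma tendsto_internal_error (h : IsClosedLoop A B C F G a ι κbar κ xr yr x xhat χ y u)
    (ha : ∀ i, a i i = 0) (ha' : ∀ i, 2 + dIn a i ≠ 0) (hA : EigInClosedUnitDisc A)
    (hF : SchurStable (A - F * C)) (hD : SchurStable (DbarM a ι)) (i : Fin N) :
    Tendsto (fun k => χ i (k + κbar) - (x i (k + κbar) - xr k)) atTop (𝓝 0) := by
  refine tendsto_zero_of_network_recurrence ha' hD hA
    (w := fun k i => χ i (k + κbar) - (x i (k + κbar) - xr k))
    (g := fun k i => A *ᵥ (xhat i (k + κbar) - netCoupling a ι i fun j => x j (k + κbar) - xr k))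
    (fun i => ?_) (fun i k => ?_) i
  · have hcont : Continuous fun v : n → ℝ => A *ᵥ v := by fun_prop
    exact (hcont.tendsto' 0 0 (by simp)).comp (h.tendsto_observer_error ha hF i)
  · have hcoupling : (netCoupling a ι i fun j => χ j (k + κbar) - (x j (k + κbar) - xr k))
        = netCoupling a ι i (fun j => χ j (k + κbar))
          - netCoupling a ι i fun j => x j (k + κbar) - xr k := map_sub _ _ _
    rw [h.error_succ, add_right_comm, h.internal_succ, hcoupling,
      netCoupling_apply i fun j => χ j _]
    simp only [Matrix.mulVec_sub]
    abel

/- With `e = χ − (x − xr)` the tracking error satisfies the delay recurrence with forcing `−BGe`. -/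
theorem tendsto_sub_reference (h : IsClosedLoop A B C F G a ι κbar κ xr yr x xhat χ y u)
    (ha : ∀ i, a i i = 0) (ha' : ∀ i, 2 + dIn a i ≠ 0)
    (hA : EigInClosedUnitDisc A) (hF : SchurStable (A - F * C)) (hD : SchurStable (DbarM a ι))
    (hG : ∀ i, spectralRadius ℂ
      (delayShift (κ i) (A.map Complex.ofReal) ((-(B * G)).map Complex.ofReal)) < 1) (i : Fin N) :
    Tendsto (fun k => x i (k + κbar) - xr k) atTop (𝓝 0) := by
  refine tendsto_zero_of_real_delay_recurrence (hG i)
    (g := fun k => -(B * G) *ᵥ (χ i (k + κbar) - (x i (k + κbar) - xr k))) ?_ fun k => ?_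
  · have hcont : Continuous fun v : n → ℝ => -(B * G) *ᵥ v := by fun_prop
    exact (hcont.tendsto' 0 0 (by simp)).comp (h.tendsto_internal_error ha ha' hA hF hD i)
  · have hdelay : k + κ i + κbar - κ i = k + κbar := by omega
    rw [h.error_succ, hdelay, h.input, add_assoc (A *ᵥ _), ← Matrix.mulVec_add, add_sub_cancel,
      Matrix.mulVec_neg, Matrix.neg_mulVec, Matrix.mulVec_mulVec]

end IsClosedLoop

end Network

theorem regulated_sync_partialstate_general {n m : ℕ} {A : Matrix (Fin n) (Fin n) ℝ}
    {B : Matrix (Fin n) (Fin m) ℝ} (hAB : Stabilizable A B) (hA : EigInClosedUnitDisc A)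
    {κbar : ℕ} (hκbar : κbar * omegaMax A < Real.pi / 2) :
    ∃ ρ : ℝ, 1 ≤ ρ ∧ ∃ εstar > (0 : ℝ), ∀ ε ∈ Set.Ioc 0 εstar, ∀ P, IsDARESol A B ε P →
      ∀ (q N : ℕ) (C : Matrix (Fin q) (Fin n) ℝ) (F : Matrix (Fin n) (Fin q) ℝ),
        SchurStable (A - F * C) →
        ∀ (a : Fin N → Fin N → ℝ) (ι : Fin N → ℝ),
        (∀ i, 2 + dIn a i ≠ 0) → (∀ i, a i i = 0) → SchurStable (DbarM a ι) →
        ∀ κ : Fin N → ℕ, (∀ i, κ i ≤ κbar) →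
        ∀ xr yr x xhat χ y u,
        IsClosedLoop A B C F (ρ • gainK A B P) a ι κbar κ xr yr x xhat χ y u →
        ∀ i, Tendsto (fun k => x i (k + κbar) - xr k) atTop (𝓝 0) := by
  obtain ⟨ρ, hρ, εstar, hεstar, hstable⟩ :=
    exists_forall_spectralRadius_delayShift_lt_one hAB hA hκbar
  exact ⟨ρ, hρ, εstar, hεstar, fun ε hε P hP q N C F hF a ι ha' ha hD κ hκ _ _ _ _ _ _ _ h =>
    h.tendsto_sub_reference ha ha' hA hF hD fun i => hstable ε hε P hP (κ i) (hκ i)⟩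

/-- Theorem 2 of the paper: scalable regulated state synchronization with
partial-state coupling in the presence of unknown non-uniform input delays. If
`κ̄·ω_max < π/2` and `A − FC` is Schur stable, there exist `ρ > 1/2` and `ε* > 0`,
depending only on the agent model and `κ̄`, such that for every `ε ∈ (0, ε*]`, every
network (with `D̄` Schur stable), all delays `κ_i ∈ {0,…,κ̄}`, and every solution of
the closed-loop system, `x_i(k) − x_r(k) → 0` for every agent `i`. Time is shifted by
`κbar`, so actual time `k` corresponds to index `k + κbar` for the agent signals. -/
theorem regulated_sync_partialstate {n m q : ℕ}
    (A : Matrix (Fin n) (Fin n) ℝ) (B : Matrix (Fin n) (Fin m) ℝ)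
    (C : Matrix (Fin q) (Fin n) ℝ)
    (hstab : Stabilizable A B) (hdet : Detectable C A) (hA : EigInClosedUnitDisc A)
    (κbar : ℕ) (hκbar : (κbar : ℝ) * omegaMax A < Real.pi / 2)
    (F : Matrix (Fin n) (Fin q) ℝ) (hF : SchurStable (A - F * C))
    (P : ℝ → Matrix (Fin n) (Fin n) ℝ)
    (hP : ∀ ε > (0 : ℝ), IsDARESol A B ε (P ε)) :
    ∃ ρ : ℝ, 1 / 2 < ρ ∧ ∃ εstar > (0 : ℝ), ∀ ε ∈ Set.Ioc (0 : ℝ) εstar,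
      ∀ (N : ℕ) (a : Fin N → Fin N → ℝ) (ι : Fin N → ℝ),
        (∀ i j, 0 ≤ a i j) → (∀ i, a i i = 0) → (∀ i, ι i = 0 ∨ ι i = 1) →
        SchurStable (DbarM a ι) →
        ∀ κ : Fin N → ℕ, (∀ i, κ i ≤ κbar) →
        ∀ xr : ℕ → Fin n → ℝ, (∀ k : ℕ, xr (k + 1) = A.mulVec (xr k)) →
        ∀ yr : ℕ → Fin q → ℝ, (∀ k : ℕ, yr k = C.mulVec (xr k)) →
        ∀ (x xhat χ : Fin N → ℕ → Fin n → ℝ) (y : Fin N → ℕ → Fin q → ℝ)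
          (u : Fin N → ℕ → Fin m → ℝ),
        (∀ i k, y i k = C.mulVec (x i k)) →
        (∀ i k, x i (k + κbar + 1)
            = A.mulVec (x i (k + κbar)) + B.mulVec (u i (k + κbar - κ i))) →
        (∀ i k, xhat i (k + κbar + 1)
            = A.mulVec (xhat i (k + κbar))
              + B.mulVec ((2 + dIn a i)⁻¹ •
                  ∑ j, lapLbar a ι i j • u j (k + κbar - κ j))
              + F.mulVec ((2 + dIn a i)⁻¹ •
                  (∑ j, a i j • (y i (k + κbar) - y j (k + κbar))
                    + ι i • (y i (k + κbar) - yr k))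
                - C.mulVec (xhat i (k + κbar)))) →
        (∀ i k, χ i (k + κbar + 1)
            = A.mulVec (χ i (k + κbar)) + B.mulVec (u i (k + κbar - κ i))
              + A.mulVec (xhat i (k + κbar))
              - A.mulVec ((2 + dIn a i)⁻¹ • ∑ j, lapLbar a ι i j • χ j (k + κbar))) →
        (∀ i k, u i k = -(ρ • (gainK A B (P ε)).mulVec (χ i k))) →
        ∀ i, Tendsto (fun k => x i (k + κbar) - xr k) atTop (nhds 0) := by
  obtain ⟨ρ, hρ, εstar, hεstar, hsync⟩ := regulated_sync_partialstate_general hstab hA hκbar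
  refine ⟨ρ, by linarith, εstar, hεstar, fun ε hε N a ι ha haa _ hD κ hκ xr hxr yr hyr x xhat χ y u
    hy hx hxhat hχ hu => ?_⟩
  have hdeg (i : Fin N) : 2 + dIn a i ≠ 0 :=
    (add_pos_of_pos_of_nonneg two_pos (Finset.sum_nonneg fun j _ => ha i j)).ne'
  have hloop : IsClosedLoop A B C F (ρ • gainK A B (P ε)) a ι κbar κ xr yr x xhat χ y u :=
    ⟨hxr, hyr, hy, hx, hxhat, hχ, fun i k => by rw [hu, Matrix.smul_mulVec]⟩
  exact hsync ε hε (P ε) (hP ε hε.1) q N C F hF a ι hdeg haa hD κ hκ _ _ _ _ _ _ _ hloop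

end
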